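/- arXiv:1112.2118 — 4 statements merged into one kernel-verified Lean document; each statement's English description precedes it below -/
import Mathlib

section
/- Let q(x) = exp(x) − x − 1 and Q(x) = x·(exp(x) − 1)/(exp(x) − x − 1). Then: (i) Q is strictly increasing on (0,∞); (ii) Q(x) > x for every x > 0; (iii) Q(x) → 2 as x → 0⁺. -/
/-- `q(x) = exp(x) - x - 1`. -/
noncomputable def q (x : ℝ) : ℝ := Real.exp x - x - 1

/-- `Q(x) = x·(exp(x) − 1)/(exp(x) − x − 1)`. -/
noncomputable def Qf (x : ℝ) : ℝ := x * (Real.exp x - 1) / (Real.exp x - x - 1)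

/-!
Everything holds on both sides of the singularity at `0`. The identity `Q(x) = x + x² / q(x)` with
`q > 0` gives `Q(x) > x`, and with `q(x) ~ x² / 2` it gives the limit `2` at `0`. The numerator of
`Q'` simplifies to `(exp x - 1)² - x² exp x`, which is positive because `|sinh (x/2)| > |x/2|`.
Filling in the value `2` at `0` makes `Q` continuous, so the two half-lines fit together and `Q` is
strictly increasing across `0` as well.
-/

open Filter Set
open scoped Topology Asymptotics

theorem strictMono_of_deriv_pos_of_ne {f : ℝ → ℝ} {a : ℝ} (hf : Continuous f)
    (hf' : ∀ x ≠ a, 0 < deriv f x) : StrictMono f := by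
  refine StrictMonoOn.Iic_union_Ici (a := a) ?_ ?_
  · refine strictMonoOn_of_deriv_pos (convex_Iic a) hf.continuousOn fun x hx ↦ hf' x ?_
    rw [interior_Iic] at hx
    exact hx.ne
  · refine strictMonoOn_of_deriv_pos (convex_Ici a) hf.continuousOn fun x hx ↦ hf' x ?_
    rw [interior_Ici] at hx
    exact hx.ne'

theorem sq_lt_sinh_sq {x : ℝ} (hx : x ≠ 0) : x ^ 2 < Real.sinh x ^ 2 := by
  rw [sq_lt_sq, Real.abs_sinh]
  exact Real.self_lt_sinh_iff.2 (abs_pos.2 hx)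

theorem exp_sub_one_sq (x : ℝ) :
    (Real.exp x - 1) ^ 2 = 4 * Real.exp x * Real.sinh (x / 2) ^ 2 := by
  have exp_eq_sq : Real.exp x = Real.exp (x / 2) ^ 2 := by
    rw [← Real.exp_nat_mul]
    congr 1
    push_cast
    ring
  rw [Real.sinh_eq, Real.exp_neg, exp_eq_sq]
  field_simp
  ring

theorem sq_mul_exp_lt_exp_sub_one_sq {x : ℝ} (hx : x ≠ 0) :
    x ^ 2 * Real.exp x < (Real.exp x - 1) ^ 2 :=
  calc x ^ 2 * Real.exp x = 4 * Real.exp x * (x / 2) ^ 2 := by ring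
    _ < 4 * Real.exp x * Real.sinh (x / 2) ^ 2 := by
      gcongr 4 * Real.exp x * ?_
      exact sq_lt_sinh_sq (div_ne_zero hx two_ne_zero)
    _ = (Real.exp x - 1) ^ 2 := (exp_sub_one_sq x).symm

theorem q_pos {x : ℝ} (hx : x ≠ 0) : 0 < q x := by
  have := Real.add_one_lt_exp hx
  rw [q]
  linarith

theorem q_isEquivalent_sq_div_two : q ~[𝓝 0] fun x ↦ x ^ 2 / 2 := by
  have taylor := Real.exp_sub_sum_range_succ_isLittleO_pow 2
  refine (taylor.congr_left fun x ↦ ?_).trans_isBigO ?_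
  · simp only [Finset.sum_range_succ, Finset.sum_range_zero, Pi.sub_apply, q, Nat.factorial]
    push_cast
    ring
  · simpa only [div_eq_inv_mul] using
      (Asymptotics.isBigO_refl _ _).const_mul_right (inv_ne_zero (two_ne_zero' ℝ))

theorem Qf_eq_add_sq_div_q {x : ℝ} (hx : x ≠ 0) : Qf x = x + x ^ 2 / q x := by
  rw [Qf, ← q, add_div' _ _ _ (q_pos hx).ne', q]
  ring

theorem lt_Qf {x : ℝ} (hx : x ≠ 0) : x < Qf x := by
  rw [Qf_eq_add_sq_div_q hx]
  exact lt_add_of_pos_right x (div_pos (sq_pos_of_ne_zero hx) (q_pos hx))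

theorem tendsto_Qf_zero : Tendsto Qf (𝓝[≠] 0) (𝓝 2) := by
  have sq_div_q : Tendsto (fun x ↦ x ^ 2 / q x) (𝓝[≠] 0) (𝓝 2) := by
    have equiv : (fun x ↦ x ^ 2 / q x) ~[𝓝[≠] 0] fun x ↦ x ^ 2 / (x ^ 2 / 2) :=
      Asymptotics.IsEquivalent.refl.div (q_isEquivalent_sq_div_two.mono nhdsWithin_le_nhds)
    refine equiv.symm.tendsto_nhds (tendsto_const_nhds.congr' ?_)
    filter_upwards [self_mem_nhdsWithin] with x hx
    exact (div_div_cancel₀ (pow_ne_zero 2 hx)).symm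
  have add_sq_div_q : Tendsto (fun x ↦ x + x ^ 2 / q x) (𝓝[≠] 0) (𝓝 (0 + 2)) :=
    (tendsto_id.mono_left nhdsWithin_le_nhds).add sq_div_q
  rw [zero_add] at add_sq_div_q
  refine add_sq_div_q.congr' ?_
  filter_upwards [self_mem_nhdsWithin] with x hx
  exact (Qf_eq_add_sq_div_q hx).symm

theorem hasDerivAt_Qf {x : ℝ} (hx : x ≠ 0) :
    HasDerivAt Qf (((Real.exp x - 1) ^ 2 - x ^ 2 * Real.exp x) / q x ^ 2) x := by
  have hexp := Real.hasDerivAt_exp x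
  have hquot := ((hasDerivAt_id x).mul (hexp.sub_const 1)).div
    ((hexp.sub (hasDerivAt_id x)).sub_const 1) (q_pos hx).ne'
  refine hquot.congr_deriv ?_
  simp only [q, id_eq, Pi.sub_apply, Pi.mul_apply]
  ring

theorem deriv_Qf_pos {x : ℝ} (hx : x ≠ 0) : 0 < deriv Qf x := by
  rw [(hasDerivAt_Qf hx).deriv]
  exact div_pos (sub_pos.2 (sq_mul_exp_lt_exp_sub_one_sq hx)) (pow_pos (q_pos hx) 2)

theorem continuous_update_Qf : Continuous (Function.update Qf 0 2) := by
  refine continuous_iff_continuousAt.2 fun x ↦ ?_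
  rcases eq_or_ne x 0 with rfl | hx
  · exact continuousAt_update_same.2 tendsto_Qf_zero
  · exact (continuousAt_update_of_ne hx).2 (hasDerivAt_Qf hx).continuousAt

theorem strictMono_update_Qf : StrictMono (Function.update Qf 0 2) := by
  refine strictMono_of_deriv_pos_of_ne (a := 0) continuous_update_Qf fun x hx ↦ ?_
  have eventuallyEq : Function.update Qf 0 2 =ᶠ[𝓝 x] Qf := by
    filter_upwards [eventually_ne_nhds hx] with y hy
    exact Function.update_of_ne hy _ _
  rw [eventuallyEq.deriv_eq]
  exact deriv_Qf_pos hx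

theorem strictMonoOn_Qf : StrictMonoOn Qf {0}ᶜ :=
  (strictMono_update_Qf.strictMonoOn _).congr fun _ hx ↦ Function.update_of_ne hx _ _

theorem stmt0_general :
    StrictMonoOn Qf {0}ᶜ ∧ (∀ x : ℝ, x ≠ 0 → x < Qf x) ∧ Tendsto Qf (𝓝[≠] 0) (𝓝 2) :=
  ⟨strictMonoOn_Qf, fun _ ↦ lt_Qf, tendsto_Qf_zero⟩

theorem stmt0 :
    StrictMonoOn Qf (Set.Ioi (0:ℝ)) ∧
    (∀ x : ℝ, 0 < x → x < Qf x) ∧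
    Filter.Tendsto Qf (nhdsWithin 0 (Set.Ioi (0:ℝ))) (nhds 2) := by
  obtain ⟨strictMonoOn, self_lt, tendsto⟩ := stmt0_general
  exact ⟨strictMonoOn.mono fun _ hx ↦ ne_of_gt hx, fun x hx ↦ self_lt x hx.ne',
    tendsto.mono_left (nhdsGT_le_nhdsNE 0)⟩
end

section
/- Let ε > 0 and C ≥ 2 + ε be constants. There exist constants 0 < c₁ ≤ c₂ such that for all positive integers m, n with (2+ε)·n ≤ m ≤ C·n, letting a > 0 be the unique solution of Q(a) = m/n, one has c₁·(m/(a·e))^m·q(a)^n ≤ M(m,n) ≤ c₂·(m/(a·e))^m·q(a)^n. -/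
/-- `M(m,n) = Σ m!/(v₁!⋯v_n!)`, the sum over all tuples `(v₁,…,v_n) ∈ ℕⁿ`
with all `vᵢ ≥ 2` and `v₁ + ⋯ + v_n = m`. -/
def M (m n : ℕ) : ℕ :=
  ∑ v ∈ (Finset.Nat.antidiagonalTuple n m).filter (fun v => ∀ i, 2 ≤ v i),
    Nat.multinomial Finset.univ v

/-!
By definition `M(m,n) = m! [xᵐ] q(x)ⁿ`. For every `a > 0` the number `[xᵐ] q(x)ⁿ · aᵐ / q(a)ⁿ` is
the probability that `n` independent Poisson variables of parameter `a`, each conditioned on being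
at least `2`, add up to `m`. Such a variable has mean `Q(a)`, so the choice `Q(a) = m / n` makes `m`
the mean of the sum, and the local limit theorem says that this probability is of order `1 / √n`.
The order is uniform because `Q(a) - 2 ≤ a ≤ Q(a)` confines `a` to `[ε, C]`. Since `m` and `n` are
comparable, the factor `√m` in Stirling's estimate of `m!` cancels `1 / √n`.

The local limit theorem is obtained by Fourier inversion: aperiodicity gives the Gaussian decay of
the characteristic function on all of `[-π, π]`, and a third moment bound compares its `n`-th power
with a Gaussian up to an error `O(1 / n)` in the integral. The finitely many `n` for which this
error is not negligible are covered by `M(m,n) ≥ 1`.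
-/

namespace TruncatedPoisson

open PowerSeries (coeff)
open Complex (I)
open scoped Real Nat PowerSeries

section PowerSeriesPowers

lemma coeff_pow_eq_sum_antidiagonalTuple {R : Type*} [CommSemiring R] (f : R⟦X⟧) (n m : ℕ) :
    coeff m (f ^ n) = ∑ v ∈ Finset.Nat.antidiagonalTuple n m, ∏ i, coeff (v i) f := by
  rw [← Fintype.card_fin n, ← Finset.card_univ, ← Finset.prod_const, PowerSeries.coeff_prod,
    Finset.card_univ, Fintype.card_fin]
  exact Finset.sum_equiv Finsupp.equivFunOnFinite
    (by simp [Finset.mem_finsuppAntidiag, Finset.Nat.mem_antidiagonalTuple]) (by simp)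

variable {𝕜 A : Type*} [NormedField 𝕜] [NormedCommRing A] [NormedAlgebra 𝕜 A] {f : 𝕜⟦X⟧} {x : A}

lemma coeff_mul_smul_pow (f g : 𝕜⟦X⟧) (x : A) (m : ℕ) :
    coeff m (f * g) • x ^ m = ∑ kl ∈ Finset.HasAntidiagonal.antidiagonal m,
      (coeff kl.1 f • x ^ kl.1) * (coeff kl.2 g • x ^ kl.2) := by
  rw [PowerSeries.coeff_mul, Finset.sum_smul]
  refine Finset.sum_congr rfl fun kl hkl => ?_
  rw [smul_mul_smul_comm, ← pow_add, Finset.HasAntidiagonal.mem_antidiagonal.1 hkl]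

lemma summable_norm_coeff_pow_smul (hf : Summable fun k => ‖coeff k f • x ^ k‖) (n : ℕ) :
    Summable fun k => ‖coeff k (f ^ n) • x ^ k‖ := by
  induction n with
  | zero =>
    refine summable_of_ne_finset_zero (s := {0}) fun k hk => ?_
    simp [PowerSeries.coeff_one, Finset.notMem_singleton.1 hk]
  | succ n ih =>
    simp_rw [pow_succ', coeff_mul_smul_pow]
    exact summable_norm_sum_mul_antidiagonal_of_summable_norm (f := fun k => coeff k f • x ^ k)
      (g := fun k => coeff k (f ^ n) • x ^ k) hf ih

lemma tsum_coeff_pow_smul [CompleteSpace A] (hf : Summable fun k => ‖coeff k f • x ^ k‖) (n : ℕ) :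
    ∑' k, coeff k (f ^ n) • x ^ k = (∑' k, coeff k f • x ^ k) ^ n := by
  induction n with
  | zero =>
    rw [tsum_eq_single 0 fun k hk => by simp [PowerSeries.coeff_one, hk]]
    simp
  | succ n ih =>
    simp_rw [pow_succ', coeff_mul_smul_pow]
    rw [← ih, tsum_mul_tsum_eq_tsum_sum_antidiagonal_of_summable_norm hf
      (summable_norm_coeff_pow_smul hf n)]

end PowerSeriesPowers

section FourierInversion

lemma integral_exp_int_mul_I (k : ℤ) :
    ∫ θ in (-π)..π, Complex.exp ((k * θ : ℝ) * I) = if k = 0 then (2 * π : ℂ) else 0 := by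
  split_ifs with hk
  · simp [hk, two_mul]
  · have hkI : (k * I : ℂ) ≠ 0 := by simp [hk]
    have hperiod : Complex.exp (k * I * (π : ℝ)) = Complex.exp (k * I * (-π : ℝ)) :=
      Complex.exp_eq_exp_iff_exists_int.2 ⟨k, by push_cast; ring⟩
    calc ∫ θ in (-π)..π, Complex.exp ((k * θ : ℝ) * I)
        = ∫ θ in (-π)..π, Complex.exp (k * I * (θ : ℝ)) := by
          congr 1; ext θ; congr 1; push_cast; ring
      _ = 0 := by rw [integral_exp_mul_complex hkI, hperiod, sub_self, zero_div]

lemma integral_tsum_mul_exp {c : ℕ → ℂ} (hc : Summable fun k => ‖c k‖) (m : ℕ) :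
    ∫ θ in (-π)..π, ∑' k, c k * Complex.exp (((k - m) * θ : ℝ) * I) = 2 * π * c m := by
  let term (k : ℕ) : C(ℝ, ℂ) := ⟨fun θ => c k * Complex.exp (((k - m) * θ : ℝ) * I), by fun_prop⟩
  have norm_term (k : ℕ) (θ : ℝ) : ‖term k θ‖ = ‖c k‖ := by
    simp only [term, ContinuousMap.coe_mk, norm_mul, Complex.norm_exp_ofReal_mul_I, mul_one]
  have summable_term : Summable fun k => ‖(term k).restrict
      (⟨Set.uIcc (-π) π, isCompact_uIcc⟩ : TopologicalSpace.Compacts ℝ)‖ := by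
    refine hc.of_nonneg_of_le (fun _ => norm_nonneg _) fun k => ?_
    exact (ContinuousMap.norm_le _ (norm_nonneg _)).2 fun θ => (norm_term k θ).le
  have integral_term (k : ℕ) :
      ∫ θ in (-π)..π, term k θ = if k = m then 2 * π * c m else 0 := by
    have hchar := integral_exp_int_mul_I (k - m)
    push_cast at hchar
    simp only [term, ContinuousMap.coe_mk, Complex.ofReal_mul, Complex.ofReal_sub,
      Complex.ofReal_natCast, intervalIntegral.integral_const_mul, hchar, sub_eq_zero, Nat.cast_inj]
    split_ifs with hkm
    · rw [hkm, mul_comm]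
    · exact mul_zero _
  have hsum := intervalIntegral.hasSum_intervalIntegral_of_summable_norm summable_term
  simp_rw [integral_term] at hsum
  exact hsum.unique (hasSum_ite_eq m _)

end FourierInversion

section ExponentialEstimates

lemma norm_exp_mul_I_sub_taylor_two_le (x : ℝ) :
    ‖Complex.exp (x * I) - 1 - x * I + (x : ℂ) ^ 2 / 2‖ ≤ 4 * |x| ^ 3 := by
  have hnorm : ‖(x * I : ℂ)‖ = |x| := by simp
  rcases le_total |x| 1 with hx | hx
  · have hbound := Complex.exp_bound (hnorm.trans_le hx) (n := 3) (by norm_num)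
    rw [hnorm] at hbound
    calc ‖Complex.exp (x * I) - 1 - x * I + (x : ℂ) ^ 2 / 2‖
        = ‖Complex.exp (x * I) - ∑ k ∈ Finset.range 3, (x * I) ^ k / (k ! : ℂ)‖ := by
          simp only [Finset.sum_range_succ, mul_pow, Complex.I_sq, Finset.range_zero,
            Finset.sum_empty, Nat.factorial]
          congr 1; push_cast; ring
      _ ≤ |x| ^ 3 * ((Nat.succ 3 : ℝ) * ((3 ! : ℝ) * (3 : ℕ))⁻¹) := hbound
      _ ≤ |x| ^ 3 * 4 := by gcongr; norm_num [Nat.factorial]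
      _ = 4 * |x| ^ 3 := mul_comm _ _
  · have hlinear : |x| ≤ |x| ^ 3 := le_self_pow₀ hx (by norm_num)
    have hquadratic : |x| ^ 2 ≤ |x| ^ 3 := pow_le_pow_right₀ hx (by norm_num)
    calc ‖Complex.exp (x * I) - 1 - x * I + (x : ℂ) ^ 2 / 2‖
        ≤ ‖Complex.exp (x * I)‖ + ‖(1 : ℂ)‖ + ‖(x * I : ℂ)‖ + ‖(x : ℂ) ^ 2 / 2‖ :=
          (norm_add_le _ _).trans <| add_le_add_left
            ((norm_sub_le _ _).trans <| add_le_add_left (norm_sub_le _ _) _) _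
      _ = 1 + 1 + |x| + |x| ^ 2 / 2 := by simp [Complex.norm_exp_ofReal_mul_I]
      _ ≤ 4 * |x| ^ 3 := by linarith

lemma abs_exp_neg_sub_one_sub_le {x : ℝ} (hx : 0 ≤ x) :
    |Real.exp (-x) - (1 - x)| ≤ x ^ 2 / 2 := by
  rw [abs_of_nonneg (sub_nonneg.2 (Real.one_sub_le_exp_neg x)), Real.exp_neg]
  have hquad : (Real.exp x)⁻¹ ≤ (1 + x + x ^ 2 / 2)⁻¹ := by
    gcongr; exact Real.quadratic_le_exp_of_nonneg hx
  have hinv : (1 + x + x ^ 2 / 2)⁻¹ ≤ 1 - x + x ^ 2 / 2 := by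
    rw [inv_le_iff_one_le_mul₀ (by positivity)]
    nlinarith [sq_nonneg (x ^ 2)]
  linarith

lemma norm_exp_mul_I_add_exp_mul_I (α β : ℝ) :
    ‖Complex.exp (α * I) + Complex.exp (β * I)‖ = 2 * |Real.cos ((α - β) / 2)| := by
  have hfactor : Complex.exp (α * I) + Complex.exp (β * I)
      = Complex.exp (((α + β) / 2 : ℝ) * I) * (2 * Real.cos ((α - β) / 2) : ℝ) := by
    push_cast
    rw [Complex.two_cos, mul_add, ← Complex.exp_add, ← Complex.exp_add]
    congr 2 <;> ring
  rw [hfactor, norm_mul, Complex.norm_exp_ofReal_mul_I, one_mul, Complex.norm_real,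
    Real.norm_eq_abs, abs_mul, abs_two]

lemma norm_pow_succ_sub_pow_succ_le {R : Type*} [NormedCommRing R] [NormOneClass R] {x y : R}
    {r : ℝ} (hx : ‖x‖ ≤ r) (hy : ‖y‖ ≤ r) (n : ℕ) :
    ‖x ^ (n + 1) - y ^ (n + 1)‖ ≤ (n + 1) * r ^ n * ‖x - y‖ := by
  have hr : 0 ≤ r := (norm_nonneg x).trans hx
  have hterm : ∀ i ∈ Finset.range (n + 1), ‖x ^ i * y ^ (n - i)‖ ≤ r ^ n := fun i hi => by
    calc ‖x ^ i * y ^ (n - i)‖ ≤ ‖x‖ ^ i * ‖y‖ ^ (n - i) :=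
          (norm_mul_le _ _).trans (by gcongr <;> exact norm_pow_le _ _)
      _ ≤ r ^ i * r ^ (n - i) := by gcongr
      _ = r ^ n := by rw [← pow_add]; congr 1; have := Finset.mem_range.1 hi; omega
  calc ‖x ^ (n + 1) - y ^ (n + 1)‖
      = ‖(∑ i ∈ Finset.range (n + 1), x ^ i * y ^ (n - i)) * (x - y)‖ := by
        rw [← (Commute.all x y).geom_sum₂_mul]; simp
    _ ≤ ((n + 1 : ℕ) • r ^ n) * ‖x - y‖ := (norm_mul_le _ _).trans <| by
        gcongr
        exact (norm_sum_le_of_le _ hterm).trans_eq (by simp)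
    _ = (n + 1) * r ^ n * ‖x - y‖ := by rw [nsmul_eq_mul]; push_cast; ring

end ExponentialEstimates

section GaussianIntegrals

lemma integral_exp_neg_mul_sq_le {b : ℝ} (hb : 0 < b) :
    ∫ θ in (-π)..π, Real.exp (-b * θ ^ 2) ≤ √(π / b) := by
  rw [← integral_gaussian b, intervalIntegral.integral_of_le (by linarith [Real.pi_pos])]
  exact MeasureTheory.setIntegral_le_integral (integrable_exp_neg_mul_sq hb)
    (.of_forall fun θ => (Real.exp_pos _).le)

lemma integral_abs_pow_three_mul_exp_neg_mul_sq {b : ℝ} (hb : 0 < b) :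
    ∫ θ : ℝ, |θ| ^ 3 * Real.exp (-b * θ ^ 2) = 1 / b ^ 2 := by
  have hGamma := integral_rpow_mul_exp_neg_mul_rpow (p := 2) (q := 3) two_pos (by norm_num) hb
  have hpow : b ^ (-(3 + 1) / 2 : ℝ) = 1 / b ^ 2 := by
    rw [show (-(3 + 1) / 2 : ℝ) = -(2 : ℕ) by norm_num, Real.rpow_neg hb.le, Real.rpow_natCast,
      one_div]
  have hGamma_two : Real.Gamma ((3 + 1) / 2) = 1 := by
    rw [show ((3 + 1) / 2 : ℝ) = 2 by norm_num, Real.Gamma_two]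
  rw [hpow, hGamma_two] at hGamma
  have habs := integral_comp_abs (f := fun θ => θ ^ 3 * Real.exp (-b * θ ^ 2))
  simp only [sq_abs] at habs
  rw [habs]
  norm_cast at hGamma
  rw [hGamma]
  ring

lemma integral_abs_pow_three_mul_exp_neg_mul_sq_le {b : ℝ} (hb : 0 < b) :
    ∫ θ in (-π)..π, |θ| ^ 3 * Real.exp (-b * θ ^ 2) ≤ 1 / b ^ 2 := by
  have hval := integral_abs_pow_three_mul_exp_neg_mul_sq hb
  rw [← hval, intervalIntegral.integral_of_le (by linarith [Real.pi_pos])]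
  exact MeasureTheory.setIntegral_le_integral
    (.of_integral_ne_zero (by rw [hval]; positivity)) (.of_forall fun θ => by positivity)

lemma le_integral_exp_neg_mul_sq {b t : ℝ} (hb : 0 ≤ b) (ht : 1 ≤ t) :
    2 * Real.exp (-b) / √t ≤ ∫ θ in (-π)..π, Real.exp (-(t * b) * θ ^ 2) := by
  have hsqrt : 1 ≤ √t := Real.one_le_sqrt.2 ht
  have hradius : 1 / √t ≤ π := by
    rw [div_le_iff₀ (by linarith)]; nlinarith [Real.pi_gt_three]
  have hradius_pos : 0 < 1 / √t := by positivity
  have hcont : Continuous fun θ : ℝ => Real.exp (-(t * b) * θ ^ 2) := by fun_prop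
  calc 2 * Real.exp (-b) / √t = ∫ _ in (-(1 / √t))..(1 / √t), Real.exp (-b) := by
        rw [intervalIntegral.integral_const, smul_eq_mul]; ring
    _ ≤ ∫ θ in (-(1 / √t))..(1 / √t), Real.exp (-(t * b) * θ ^ 2) := by
        refine intervalIntegral.integral_mono_on (by linarith) (by simp)
          (hcont.intervalIntegrable _ _) fun θ hθ => Real.exp_le_exp.2 ?_
        have hθt : t * θ ^ 2 ≤ 1 := by
          have := sq_le_sq' hθ.1 hθ.2
          rwa [div_pow, Real.sq_sqrt (by positivity), one_pow, le_div_iff₀' (by positivity)] at this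
        nlinarith
    _ ≤ ∫ θ in (-π)..π, Real.exp (-(t * b) * θ ^ 2) :=
        intervalIntegral.integral_mono_interval (by linarith) (by linarith) hradius
          (.of_forall fun θ => by positivity) (hcont.intervalIntegrable _ _)

end GaussianIntegrals

section GaussianComparison

variable {ψ : ℝ → ℂ} {c : ℝ} {n : ℕ}

lemma norm_integral_pow_le (hc : 0 < c)
    (hdecay : ∀ θ, |θ| ≤ π → ‖ψ θ‖ ≤ Real.exp (-c * θ ^ 2)) (hn : 0 < n) :
    ‖∫ θ in (-π)..π, ψ θ ^ n‖ ≤ √(π / c) / √n := by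
  have : (0 : ℝ) < n := mod_cast hn
  have hpow : ∀ θ ∈ Set.Ioc (-π) π, ‖ψ θ ^ n‖ ≤ Real.exp (-(n * c) * θ ^ 2) := fun θ hθ => by
    calc ‖ψ θ ^ n‖ ≤ Real.exp (-c * θ ^ 2) ^ n := by
          rw [norm_pow]; gcongr; exact hdecay θ (abs_le.2 ⟨hθ.1.le, hθ.2⟩)
      _ = Real.exp (-(n * c) * θ ^ 2) := by rw [← Real.exp_nat_mul]; congr 1; ring
  calc ‖∫ θ in (-π)..π, ψ θ ^ n‖ ≤ ∫ θ in (-π)..π, Real.exp (-(n * c) * θ ^ 2) :=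
        intervalIntegral.norm_integral_le_of_norm_le (by linarith [Real.pi_pos])
          (.of_forall hpow) (Continuous.intervalIntegrable (by fun_prop) _ _)
    _ ≤ √(π / (n * c)) := integral_exp_neg_mul_sq_le (by positivity)
    _ = √(π / c) / √n := by rw [← Real.sqrt_div (by positivity)]; congr 1; field_simp

variable {b K : ℝ}

lemma norm_pow_sub_gaussian_pow_le (hc : 0 ≤ c) (hcb : c ≤ b) {θ : ℝ} (hθ : |θ| ≤ π) {z : ℂ}
    (hdecay : ‖z‖ ≤ Real.exp (-c * θ ^ 2))
    (happrox : ‖z - Real.exp (-b * θ ^ 2)‖ ≤ K * |θ| ^ 3) (hn : 0 < n) :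
    ‖z ^ n - Real.exp (-(n * b) * θ ^ 2)‖
      ≤ n * Real.exp (c * π ^ 2) * K * (|θ| ^ 3 * Real.exp (-(n * c) * θ ^ 2)) := by
  obtain ⟨j, rfl⟩ := Nat.exists_eq_succ_of_ne_zero hn.ne'
  have hgauss : ‖(Real.exp (-b * θ ^ 2) : ℂ)‖ ≤ Real.exp (-c * θ ^ 2) := by
    rw [Complex.norm_real, Real.norm_of_nonneg (Real.exp_pos _).le]
    gcongr
  have hsq : θ ^ 2 ≤ π ^ 2 := sq_le_sq' (abs_le.1 hθ).1 (abs_le.1 hθ).2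
  have hshift : Real.exp (-c * θ ^ 2) ^ j
      ≤ Real.exp (c * π ^ 2) * Real.exp (-((j + 1 : ℕ) * c) * θ ^ 2) := by
    rw [← Real.exp_nat_mul, ← Real.exp_add, Real.exp_le_exp]
    push_cast
    nlinarith
  calc ‖z ^ (j + 1) - Real.exp (-((j + 1 : ℕ) * b) * θ ^ 2)‖
      = ‖z ^ (j + 1) - (Real.exp (-b * θ ^ 2) : ℂ) ^ (j + 1)‖ := by
        rw [← Complex.ofReal_pow, ← Real.exp_nat_mul]; congr 4; ring
    _ ≤ (j + 1) * Real.exp (-c * θ ^ 2) ^ j * ‖z - Real.exp (-b * θ ^ 2)‖ :=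
        norm_pow_succ_sub_pow_succ_le hdecay hgauss j
    _ ≤ (j + 1) * (Real.exp (c * π ^ 2) * Real.exp (-((j + 1 : ℕ) * c) * θ ^ 2))
          * (K * |θ| ^ 3) := by gcongr
    _ = _ := by push_cast; ring

lemma norm_integral_pow_sub_integral_gaussian_le (hc : 0 < c) (hcb : c ≤ b) (hK : 0 ≤ K)
    (hcont : Continuous ψ) (hdecay : ∀ θ, |θ| ≤ π → ‖ψ θ‖ ≤ Real.exp (-c * θ ^ 2))
    (happrox : ∀ θ, |θ| ≤ π → ‖ψ θ - Real.exp (-b * θ ^ 2)‖ ≤ K * |θ| ^ 3) (hn : 0 < n) :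
    ‖(∫ θ in (-π)..π, ψ θ ^ n) - (∫ θ in (-π)..π, Real.exp (-(n * b) * θ ^ 2) : ℝ)‖
      ≤ Real.exp (c * π ^ 2) * K / c ^ 2 / n := by
  have : (0 : ℝ) < n := mod_cast hn
  rw [← intervalIntegral.integral_ofReal,
    ← intervalIntegral.integral_sub (Continuous.intervalIntegrable (by fun_prop) _ _)
      (Continuous.intervalIntegrable (by fun_prop) _ _)]
  calc ‖∫ θ in (-π)..π, (ψ θ ^ n - (Real.exp (-(n * b) * θ ^ 2) : ℝ))‖
      ≤ ∫ θ in (-π)..π, n * Real.exp (c * π ^ 2) * K * (|θ| ^ 3 * Real.exp (-(n * c) * θ ^ 2)) := by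
        refine intervalIntegral.norm_integral_le_of_norm_le (by linarith [Real.pi_pos])
          (.of_forall fun θ hθ => ?_) (Continuous.intervalIntegrable (by fun_prop) _ _)
        have hθ' : |θ| ≤ π := abs_le.2 ⟨hθ.1.le, hθ.2⟩
        exact norm_pow_sub_gaussian_pow_le hc.le hcb hθ' (hdecay θ hθ') (happrox θ hθ') hn
    _ ≤ n * Real.exp (c * π ^ 2) * K * (1 / (n * c) ^ 2) := by
        rw [intervalIntegral.integral_const_mul]
        gcongr
        exact integral_abs_pow_three_mul_exp_neg_mul_sq_le (by positivity)
    _ = Real.exp (c * π ^ 2) * K / c ^ 2 / n := by field_simp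

end GaussianComparison

section LatticeLaw

/-- The characteristic function `θ ↦ ∑ pₖ e^{i(k - μ)θ}`, centred at `μ`, of the law on `ℕ` with
probability generating function `P = ∑ pₖ Xᵏ`. -/
noncomputable def centeredCharFun (P : ℝ⟦X⟧) (μ θ : ℝ) : ℂ :=
  ∑' k : ℕ, ((coeff k P : ℝ) : ℂ) * Complex.exp (((k - μ) * θ : ℝ) * I)

/-- The second moment `∑ pₖ (k - μ)²` about `μ` of the law on `ℕ` with probability generating
function `P = ∑ pₖ Xᵏ`. -/
noncomputable def variance (P : ℝ⟦X⟧) (μ : ℝ) : ℝ := ∑' k : ℕ, coeff k P * (k - μ) ^ 2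

/-- `P` is the probability generating function of a law on `ℕ` with mean `μ` and third absolute
central moment at most `B`, giving mass at least `d` to two consecutive integers. The last
condition makes the law aperiodic; the local limit theorem is uniform over all laws sharing
`d > 0` and `B`. -/
structure IsLatticeLaw (P : ℝ⟦X⟧) (μ d B : ℝ) : Prop where
  coeff_nonneg (k : ℕ) : 0 ≤ coeff k P
  hasSum_coeff : HasSum (fun k => coeff k P) 1
  hasSum_coeff_mul_sub : HasSum (fun k : ℕ => coeff k P * (k - μ)) 0
  summable_third_moment : Summable fun k : ℕ => coeff k P * |k - μ| ^ 3
  third_moment_le : ∑' k : ℕ, coeff k P * |k - μ| ^ 3 ≤ B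
  exists_consecutive : ∃ j, d ≤ coeff j P ∧ d ≤ coeff (j + 1) P

variable {P : ℝ⟦X⟧} {μ d B : ℝ}

lemma summable_norm_coeff_mul_exp (hP : Summable fun k => ‖coeff k P‖) (μ θ : ℝ) :
    Summable fun k : ℕ => ‖((coeff k P : ℝ) : ℂ) * Complex.exp (((k - μ) * θ : ℝ) * I)‖ := by
  simpa only [norm_mul, Complex.norm_exp_ofReal_mul_I, mul_one, Complex.norm_real] using hP

lemma continuous_centeredCharFun (hP : Summable fun k => ‖coeff k P‖) (μ : ℝ) :
    Continuous (centeredCharFun P μ) :=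
  continuous_tsum (fun k => by fun_prop) hP fun k θ => by
    rw [norm_mul, Complex.norm_exp_ofReal_mul_I, mul_one, Complex.norm_real]

lemma coeff_mul_exp_eq (f : ℝ⟦X⟧) (k : ℕ) (μ θ : ℝ) :
    ((coeff k f : ℝ) : ℂ) * Complex.exp (((k - μ) * θ : ℝ) * I)
      = Complex.exp (-(μ * θ) * I) * coeff k f • Complex.exp (θ * I) ^ k := by
  rw [Complex.real_smul, ← Complex.exp_nat_mul, mul_left_comm, ← Complex.exp_add]
  congr 2
  push_cast
  ring

lemma centeredCharFun_pow (hP : Summable fun k => ‖coeff k P‖) (μ θ : ℝ) (n : ℕ) :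
    centeredCharFun P μ θ ^ n = centeredCharFun (P ^ n) (n * μ) θ := by
  have hP' : Summable fun k => ‖coeff k P • Complex.exp (θ * I) ^ k‖ := by
    simpa only [norm_smul, norm_pow, Complex.norm_exp_ofReal_mul_I, one_pow, mul_one] using hP
  simp only [centeredCharFun, coeff_mul_exp_eq, tsum_mul_left]
  rw [mul_pow, tsum_coeff_pow_smul hP', ← Complex.exp_nat_mul]
  congr 2
  push_cast
  ring

lemma integral_centeredCharFun_pow (hP : Summable fun k => ‖coeff k P‖) {m n : ℕ}
    (hmean : n * μ = m) :
    ∫ θ in (-π)..π, centeredCharFun P μ θ ^ n = (2 * π * coeff m (P ^ n) : ℝ) := by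
  have hP' : Summable fun k => ‖((coeff k (P ^ n) : ℝ) : ℂ)‖ := by
    have hpow := summable_norm_coeff_pow_smul (f := P) (x := (1 : ℝ))
      (by simpa only [one_pow, smul_eq_mul, mul_one] using hP) n
    simpa only [one_pow, smul_eq_mul, mul_one, Complex.norm_real] using hpow
  simp_rw [centeredCharFun_pow hP, hmean, centeredCharFun]
  rw [integral_tsum_mul_exp hP']
  push_cast
  rfl

namespace IsLatticeLaw

lemma summable_norm (h : IsLatticeLaw P μ d B) : Summable fun k => ‖coeff k P‖ :=
  h.hasSum_coeff.summable.norm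

lemma hasSum_centeredCharFun (h : IsLatticeLaw P μ d B) (θ : ℝ) :
    HasSum (fun k : ℕ => ((coeff k P : ℝ) : ℂ) * Complex.exp (((k - μ) * θ : ℝ) * I))
      (centeredCharFun P μ θ) :=
  (summable_norm_coeff_mul_exp h.summable_norm μ θ).of_norm.hasSum

lemma norm_centeredCharFun_le (h : IsLatticeLaw P μ d B) (hd : 0 ≤ d) {θ : ℝ} (hθ : |θ| ≤ π) :
    ‖centeredCharFun P μ θ‖ ≤ Real.exp (-(d / π ^ 2) * θ ^ 2) := by
  obtain ⟨j, hj, hj'⟩ := h.exists_consecutive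
  set e : ℕ → ℂ := fun k => Complex.exp (((k - μ) * θ : ℝ) * I) with he
  have norm_e (k : ℕ) : ‖e k‖ = 1 := Complex.norm_exp_ofReal_mul_I _
  have norm_mul_e {r : ℝ} (hr : 0 ≤ r) (k : ℕ) : ‖r * e k‖ = r := by
    rw [norm_mul, norm_e, mul_one, Complex.norm_real, Real.norm_of_nonneg hr]
  have hchar := (Finset.hasSum_iff_compl {j, j + 1}).1 (h.hasSum_centeredCharFun θ)
  have hmass := (Finset.hasSum_iff_compl {j, j + 1}).1 h.hasSum_coeff
  have hrest := hchar.norm_le_of_bounded hmass fun k => (norm_mul_e (h.coeff_nonneg k) k).le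
  rw [Finset.sum_pair (by simp), Finset.sum_pair (by simp)] at hrest
  have hcos : ‖e j + e (j + 1)‖ ≤ 2 * (1 - 2 / π ^ 2 * (θ / 2) ^ 2) := by
    have hhalf : |θ / 2| ≤ π / 2 := by rw [abs_div, abs_two]; linarith
    have hangle : ((j - μ) * θ - ((j + 1 : ℕ) - μ) * θ) / 2 = -(θ / 2) := by push_cast; ring
    rw [he, norm_exp_mul_I_add_exp_mul_I, hangle, Real.cos_neg,
      abs_of_nonneg (Real.cos_nonneg_of_mem_Icc (abs_le.1 hhalf))]
    gcongr
    exact Real.cos_le_one_sub_mul_cos_sq (by linarith [Real.pi_pos])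
  have hsplit : centeredCharFun P μ θ
      = (centeredCharFun P μ θ - (coeff j P * e j + coeff (j + 1) P * e (j + 1)))
        + (coeff j P - d : ℝ) * e j + (coeff (j + 1) P - d : ℝ) * e (j + 1)
        + d * (e j + e (j + 1)) := by
    push_cast; ring
  calc ‖centeredCharFun P μ θ‖
      ≤ (1 - (coeff j P + coeff (j + 1) P)) + (coeff j P - d) + (coeff (j + 1) P - d)
        + d * (2 * (1 - 2 / π ^ 2 * (θ / 2) ^ 2)) := by
        rw [hsplit]
        refine norm_add_le_of_le (norm_add_le_of_le (norm_add_le_of_le hrest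
          (norm_mul_e (sub_nonneg.2 hj) j).le) (norm_mul_e (sub_nonneg.2 hj') (j + 1)).le) ?_
        rw [norm_mul, Complex.norm_real, Real.norm_of_nonneg hd]
        gcongr
    _ = -(d / π ^ 2) * θ ^ 2 + 1 := by ring
    _ ≤ Real.exp (-(d / π ^ 2) * θ ^ 2) := Real.add_one_le_exp _

lemma third_moment_nonneg (h : IsLatticeLaw P μ d B) :
    0 ≤ ∑' k : ℕ, coeff k P * |k - μ| ^ 3 :=
  tsum_nonneg fun k => mul_nonneg (h.coeff_nonneg k) (by positivity)

lemma coeff_mul_sq_le (h : IsLatticeLaw P μ d B) (k : ℕ) :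
    coeff k P * (k - μ) ^ 2 ≤ coeff k P + coeff k P * |k - μ| ^ 3 := by
  have hsq : ((k : ℝ) - μ) ^ 2 ≤ 1 + |(k : ℝ) - μ| ^ 3 := by
    rw [← sq_abs]
    rcases le_total |(k : ℝ) - μ| 1 with hle | hge
    · linarith [pow_le_one₀ (n := 2) (abs_nonneg ((k : ℝ) - μ)) hle,
        pow_nonneg (abs_nonneg ((k : ℝ) - μ)) 3]
    · linarith [pow_le_pow_right₀ hge (show 2 ≤ 3 by norm_num)]
  linarith [mul_le_mul_of_nonneg_left hsq (h.coeff_nonneg k)]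

lemma hasSum_variance (h : IsLatticeLaw P μ d B) :
    HasSum (fun k : ℕ => coeff k P * (k - μ) ^ 2) (variance P μ) :=
  (Summable.of_nonneg_of_le (fun k => mul_nonneg (h.coeff_nonneg k) (sq_nonneg _))
    h.coeff_mul_sq_le (h.hasSum_coeff.summable.add h.summable_third_moment)).hasSum

lemma variance_le (h : IsLatticeLaw P μ d B) : variance P μ ≤ 1 + B :=
  (hasSum_le h.coeff_mul_sq_le h.hasSum_variance
    (h.hasSum_coeff.add h.summable_third_moment.hasSum)).trans
    (by linarith [h.third_moment_le])

lemma half_le_variance (h : IsLatticeLaw P μ d B) (hd : 0 ≤ d) : d / 2 ≤ variance P μ := by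
  obtain ⟨j, hj, hj'⟩ := h.exists_consecutive
  calc d / 2 ≤ d * (j - μ) ^ 2 + d * ((j + 1 : ℕ) - μ) ^ 2 := by
        push_cast
        nlinarith [mul_nonneg hd (sq_nonneg (2 * (j - μ) + 1))]
    _ ≤ ∑ k ∈ {j, j + 1}, coeff k P * (k - μ) ^ 2 := by
        rw [Finset.sum_pair (by simp)]; gcongr
    _ ≤ variance P μ :=
        sum_le_hasSum _ (fun k _ => mul_nonneg (h.coeff_nonneg k) (sq_nonneg _)) h.hasSum_variance

lemma norm_centeredCharFun_sub_taylor_two_le (h : IsLatticeLaw P μ d B) (θ : ℝ) :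
    ‖centeredCharFun P μ θ - (1 - variance P μ / 2 * θ ^ 2 : ℝ)‖ ≤ 4 * B * |θ| ^ 3 := by
  have hmass : HasSum (fun k => ((coeff k P : ℝ) : ℂ)) (1 : ℝ) :=
    Complex.hasSum_ofReal.2 h.hasSum_coeff
  have hmean : HasSum (fun k : ℕ => ((coeff k P * (k - μ) : ℝ) : ℂ)) (0 : ℝ) :=
    Complex.hasSum_ofReal.2 h.hasSum_coeff_mul_sub
  have hvar : HasSum (fun k : ℕ => ((coeff k P * (k - μ) ^ 2 : ℝ) : ℂ)) (variance P μ) :=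
    Complex.hasSum_ofReal.2 h.hasSum_variance
  have hremainder := (((h.hasSum_centeredCharFun θ).sub hmass).sub
    (hmean.mul_right (θ * I))).add (hvar.mul_right ((θ : ℂ) ^ 2 / 2))
  calc ‖centeredCharFun P μ θ - (1 - variance P μ / 2 * θ ^ 2 : ℝ)‖
      = ‖centeredCharFun P μ θ - (1 : ℝ) - (0 : ℝ) * (θ * I)
          + variance P μ * ((θ : ℂ) ^ 2 / 2)‖ := by
        congr 1; push_cast; ring
    _ ≤ (∑' k : ℕ, coeff k P * |k - μ| ^ 3) * (4 * |θ| ^ 3) := by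
        refine hremainder.norm_le_of_bounded
          (h.summable_third_moment.hasSum.mul_right (4 * |θ| ^ 3)) fun k => ?_
        calc _ = ‖((coeff k P : ℝ) : ℂ) * (Complex.exp (((k - μ) * θ : ℝ) * I) - 1
              - ((k - μ) * θ : ℝ) * I + (((k - μ) * θ : ℝ) : ℂ) ^ 2 / 2)‖ := by
              congr 1; push_cast; ring
          _ ≤ coeff k P * (4 * |(k - μ) * θ| ^ 3) := by
              rw [norm_mul, Complex.norm_real, Real.norm_of_nonneg (h.coeff_nonneg k)]
              exact mul_le_mul_of_nonneg_left (norm_exp_mul_I_sub_taylor_two_le _)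
                (h.coeff_nonneg k)
          _ = coeff k P * |k - μ| ^ 3 * (4 * |θ| ^ 3) := by rw [abs_mul]; ring
    _ ≤ B * (4 * |θ| ^ 3) := by gcongr; exact h.third_moment_le
    _ = 4 * B * |θ| ^ 3 := by ring

lemma norm_centeredCharFun_sub_gaussian_le (h : IsLatticeLaw P μ d B) (hd : 0 ≤ d) {θ : ℝ}
    (hθ : |θ| ≤ π) :
    ‖centeredCharFun P μ θ - Real.exp (-(variance P μ / 2) * θ ^ 2)‖
      ≤ (4 * B + (1 + B) ^ 2) * |θ| ^ 3 := by
  have hvar_nonneg : 0 ≤ variance P μ := (by positivity : 0 ≤ d / 2).trans (h.half_le_variance hd)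
  have hfour : θ ^ 4 ≤ 8 * |θ| ^ 3 := by
    rw [← Even.pow_abs (by decide) θ, pow_succ']
    gcongr
    linarith [Real.pi_le_four]
  have hgauss : |Real.exp (-(variance P μ / 2) * θ ^ 2) - (1 - variance P μ / 2 * θ ^ 2)|
      ≤ (1 + B) ^ 2 * |θ| ^ 3 := by
    rw [neg_mul]
    calc _ ≤ (variance P μ / 2 * θ ^ 2) ^ 2 / 2 := abs_exp_neg_sub_one_sub_le (by positivity)
      _ = variance P μ ^ 2 * (θ ^ 4 / 8) := by ring
      _ ≤ (1 + B) ^ 2 * |θ| ^ 3 := by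
          gcongr
          · exact h.variance_le
          · linarith
  rw [add_mul]
  refine (norm_sub_le_norm_sub_add_norm_sub _ ((1 - variance P μ / 2 * θ ^ 2 : ℝ) : ℂ) _).trans
    (add_le_add (h.norm_centeredCharFun_sub_taylor_two_le θ) ?_)
  rwa [norm_sub_rev, ← Complex.ofReal_sub, Complex.norm_real]

lemma coeff_pow_le (h : IsLatticeLaw P μ d B) (hd : 0 < d) {m n : ℕ} (hn : 0 < n)
    (hmean : n * μ = m) : coeff m (P ^ n) ≤ √(π / (d / π ^ 2)) / (2 * π) / √n := by
  have hbound := norm_integral_pow_le (by positivity)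
    (fun θ hθ => h.norm_centeredCharFun_le hd.le hθ) hn
  rw [integral_centeredCharFun_pow h.summable_norm hmean, Complex.norm_real] at hbound
  rw [div_right_comm, le_div_iff₀' (by positivity)]
  exact (le_abs_self _).trans hbound

lemma le_coeff_pow (h : IsLatticeLaw P μ d B) (hd : 0 < d) {m n : ℕ} (hn : 0 < n)
    (hmean : n * μ = m) :
    2 * Real.exp (-((1 + B) / 2)) / √n
        - Real.exp (d / π ^ 2 * π ^ 2) * (4 * B + (1 + B) ^ 2) / (d / π ^ 2) ^ 2 / n
      ≤ 2 * π * coeff m (P ^ n) := by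
  have hB : 0 ≤ B := h.third_moment_nonneg.trans h.third_moment_le
  have hrate : d / π ^ 2 ≤ variance P μ / 2 := by
    calc d / π ^ 2 ≤ d / 4 := by gcongr; nlinarith [Real.pi_gt_three]
      _ ≤ variance P μ / 2 := by linarith [h.half_le_variance hd.le]
  have hdiff := norm_integral_pow_sub_integral_gaussian_le (by positivity) hrate (by positivity)
    (continuous_centeredCharFun h.summable_norm μ)
    (fun θ hθ => h.norm_centeredCharFun_le hd.le hθ)
    (fun θ hθ => h.norm_centeredCharFun_sub_gaussian_le hd.le hθ) hn
  rw [integral_centeredCharFun_pow h.summable_norm hmean, ← Complex.ofReal_sub,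
    Complex.norm_real] at hdiff
  have hgauss : 2 * Real.exp (-((1 + B) / 2)) / √n
      ≤ ∫ θ in (-π)..π, Real.exp (-(n * (variance P μ / 2)) * θ ^ 2) :=
    le_trans (by gcongr; exact h.variance_le) (le_integral_exp_neg_mul_sq
      (le_trans (by positivity) hrate) (Nat.one_le_cast.2 hn))
  linarith [(abs_le.1 hdiff).1]

end IsLatticeLaw

theorem exists_coeff_pow_bounds (hd : 0 < d) (B : ℝ) :
    ∃ k₁ k₂ : ℝ, 0 < k₁ ∧ 0 < k₂ ∧ ∃ N : ℕ, ∀ (P : ℝ⟦X⟧) (μ : ℝ), IsLatticeLaw P μ d B →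
      ∀ m n : ℕ, 0 < n → n * μ = m →
        coeff m (P ^ n) ≤ k₂ / √n ∧ (N ≤ n → k₁ / √n ≤ coeff m (P ^ n)) := by
  set E : ℝ := Real.exp (-((1 + B) / 2))
  set L : ℝ := Real.exp (d / π ^ 2 * π ^ 2) * (4 * B + (1 + B) ^ 2) / (d / π ^ 2) ^ 2
  have hE : 0 < E := Real.exp_pos _
  obtain ⟨N, hN⟩ := exists_nat_ge ((L / E) ^ 2)
  refine ⟨E / (2 * π), √(π / (d / π ^ 2)) / (2 * π), by positivity, by positivity, N,
    fun P μ h m n hn hmean => ⟨h.coeff_pow_le hd hn hmean, fun hNn => ?_⟩⟩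
  have hn' : (0 : ℝ) < n := mod_cast hn
  have herror : L / n ≤ E / √n := by
    have hL : L ≤ √n * E := (div_le_iff₀ hE).1 <|
      Real.le_sqrt_of_sq_le (hN.trans (Nat.cast_le.2 hNn))
    calc L / n ≤ √n * E / n := by gcongr
      _ = E / √n := by field_simp; rw [Real.sq_sqrt hn'.le]
  rw [div_right_comm, div_le_iff₀' (by positivity)]
  calc E / √n = 2 * E / √n - E / √n := by ring
    _ ≤ 2 * E / √n - L / n := by gcongr
    _ ≤ 2 * π * coeff m (P ^ n) := h.le_coeff_pow hd hn hmean

end LatticeLaw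

section CountingTuples

/-- The power series `∑_{k ≥ 2} Xᵏ / k!` of `q`, which is the exponential generating function of
sets with at least two elements. -/
noncomputable def qSeries : ℝ⟦X⟧ := PowerSeries.exp ℝ - PowerSeries.X - 1

lemma coeff_qSeries (k : ℕ) : coeff k qSeries = if 2 ≤ k then (k ! : ℝ)⁻¹ else 0 := by
  match k with
  | 0 => simp [qSeries]
  | 1 => simp [qSeries, PowerSeries.coeff_one]
  | k + 2 => simp [qSeries, PowerSeries.coeff_exp, PowerSeries.coeff_X, PowerSeries.coeff_one]

lemma coeff_qSeries_nonneg (k : ℕ) : 0 ≤ coeff k qSeries := by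
  rw [coeff_qSeries]; positivity

lemma coeff_qSeries_le (k : ℕ) : coeff k qSeries ≤ (k ! : ℝ)⁻¹ := by
  rw [coeff_qSeries]
  split_ifs
  · exact le_rfl
  · positivity

lemma prod_coeff_qSeries {n : ℕ} (v : Fin n → ℕ) :
    ∏ i, coeff (v i) qSeries = if ∀ i, 2 ≤ v i then (∏ i, ((v i)! : ℝ))⁻¹ else 0 := by
  simp only [coeff_qSeries, ← Finset.prod_inv_distrib]
  simp [Finset.prod_ite_zero]

lemma M_eq_factorial_mul_coeff (m n : ℕ) : (M m n : ℝ) = m ! * coeff m (qSeries ^ n) := by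
  rw [coeff_pow_eq_sum_antidiagonalTuple, M, Finset.sum_filter, Nat.cast_sum, Finset.mul_sum]
  refine Finset.sum_congr rfl fun v hv => ?_
  have hspec : (∏ i, ((v i)! : ℝ)) * Nat.multinomial Finset.univ v = m ! := by
    rw [← Finset.Nat.mem_antidiagonalTuple.1 hv]
    exact mod_cast Nat.multinomial_spec Finset.univ v
  have hprod : ∏ i, ((v i)! : ℝ) ≠ 0 := Finset.prod_ne_zero_iff.2 fun i _ => by positivity
  rw [prod_coeff_qSeries]
  split_ifs
  · rw [← hspec]; field_simp
  · simp

lemma M_pos {m n : ℕ} (hn : 0 < n) (hmn : 2 * n ≤ m) : 0 < M m n := by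
  obtain ⟨j, rfl⟩ := Nat.exists_eq_succ_of_ne_zero hn.ne'
  let v : Fin (j + 1) → ℕ := Fin.cons (m - 2 * j) fun _ => 2
  have hsum : ∑ i, v i = m := by
    simp only [v, Fin.sum_univ_succ, Fin.cons_zero, Fin.cons_succ, Finset.sum_const,
      Finset.card_univ, Fintype.card_fin, smul_eq_mul]
    omega
  have hv : ∀ i, 2 ≤ v i := Fin.cases (by simp only [v, Fin.cons_zero]; omega) fun _ => le_rfl
  exact Finset.sum_pos (fun w _ => Nat.multinomial_pos _ w)
    ⟨v, Finset.mem_filter.2 ⟨Finset.Nat.mem_antidiagonalTuple.2 hsum, hv⟩⟩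

lemma inv_factorial_le_coeff_qSeries_pow {m n : ℕ} (hn : 0 < n) (hmn : 2 * n ≤ m) :
    (m ! : ℝ)⁻¹ ≤ coeff m (qSeries ^ n) := by
  rw [inv_le_iff_one_le_mul₀' (by positivity), ← M_eq_factorial_mul_coeff]
  exact mod_cast M_pos hn hmn

end CountingTuples

section ExponentialSums

lemma hasSum_pow_div_factorial (x : ℝ) : HasSum (fun k : ℕ => x ^ k / k !) (Real.exp x) := by
  rw [Real.exp_eq_exp_ℝ]
  exact NormedSpace.expSeries_div_hasSum_exp x

lemma hasSum_coeff_qSeries_mul_pow (x : ℝ) : HasSum (fun k => coeff k qSeries * x ^ k) (q x) := by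
  have hexp := (hasSum_nat_add_iff' 2).2 (hasSum_pow_div_factorial x)
  refine (hasSum_nat_add_iff' 2).1 ?_
  convert hexp using 1
  · funext k
    simp [coeff_qSeries, div_eq_inv_mul]
  · simp [Finset.sum_range_succ, coeff_qSeries, q]
    ring

lemma hasSum_coeff_qSeries_mul_pow_mul (x : ℝ) :
    HasSum (fun k : ℕ => coeff k qSeries * x ^ k * k) (x * (Real.exp x - 1)) := by
  have hexp : HasSum (fun k : ℕ => x * (x ^ (k + 1) / (k + 1)!)) (x * (Real.exp x - 1)) := by
    simpa using ((hasSum_nat_add_iff' 1).2 (hasSum_pow_div_factorial x)).mul_left x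
  have hshift (k : ℕ) : coeff (k + 2) qSeries * x ^ (k + 2) * (k + 2 : ℕ)
      = x * (x ^ (k + 1) / (k + 1)!) := by
    have hfactorial : ((k + 2)! : ℝ) = (k + 2 : ℕ) * (k + 1)! :=
      mod_cast Nat.factorial_succ (k + 1)
    rw [coeff_qSeries, if_pos (Nat.le_add_left 2 k), hfactorial]
    field_simp
    ring
  refine (hasSum_nat_add_iff' 2).1 ?_
  simp_rw [hshift]
  simpa [Finset.sum_range_succ, coeff_qSeries] using hexp

lemma abs_sub_pow_three_le {μ : ℝ} (hμ : 0 ≤ μ) (k : ℕ) :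
    |k - μ| ^ 3 ≤ 6 * (Real.exp μ * Real.exp 1 ^ k) := by
  have hcube := Real.pow_div_factorial_le_exp |k - μ| (abs_nonneg _) 3
  have hexp : Real.exp |k - μ| ≤ Real.exp μ * Real.exp 1 ^ k := by
    rw [← Real.exp_nat_mul, ← Real.exp_add, Real.exp_le_exp, abs_le]
    constructor <;> linarith [Nat.cast_nonneg (α := ℝ) k]
  rw [div_le_iff₀ (by positivity)] at hcube
  norm_num [Nat.factorial] at hcube
  linarith

variable {a : ℝ}

lemma sq_div_two_le_q (ha : 0 ≤ a) : a ^ 2 / 2 ≤ q a := by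
  unfold q
  linarith [Real.quadratic_le_exp_of_nonneg ha]

lemma q_pos (ha : 0 < a) : 0 < q a := lt_of_lt_of_le (by positivity) (sq_div_two_le_q ha.le)

lemma q_le_exp (ha : 0 ≤ a) : q a ≤ Real.exp a := by
  unfold q
  linarith

lemma Qf_eq_add (ha : 0 < a) : Qf a = a + a ^ 2 / q a := by
  have hq := q_pos ha
  rw [Qf, ← q, eq_comm, eq_div_iff hq.ne', add_mul, div_mul_cancel₀ _ hq.ne', q]
  ring

lemma Qf_le (ha : 0 < a) : Qf a ≤ a + 2 := by
  rw [Qf_eq_add ha]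
  gcongr
  rw [div_le_iff₀ (q_pos ha)]
  linarith [sq_div_two_le_q ha.le]

lemma le_Qf (ha : 0 < a) : a ≤ Qf a := by
  rw [Qf_eq_add ha]
  have := q_pos ha
  exact le_add_of_nonneg_right (by positivity)

end ExponentialSums

section TruncatedPoissonLaw

variable {a : ℝ}

/-- The probability generating function `q(aX) / q(a)` of a Poisson variable of parameter `a`
conditioned on being at least `2`. -/
noncomputable def truncatedPoisson (a : ℝ) : ℝ⟦X⟧ :=
  PowerSeries.C (q a)⁻¹ * PowerSeries.rescale a qSeries

lemma coeff_truncatedPoisson (a : ℝ) (k : ℕ) :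
    coeff k (truncatedPoisson a) = coeff k qSeries * a ^ k / q a := by
  rw [truncatedPoisson, PowerSeries.coeff_C_mul, PowerSeries.coeff_rescale]
  ring

lemma coeff_truncatedPoisson_pow (a : ℝ) (m n : ℕ) :
    coeff m (truncatedPoisson a ^ n) = coeff m (qSeries ^ n) * (a ^ m / q a ^ n) := by
  rw [truncatedPoisson, mul_pow, ← map_pow, ← map_pow, PowerSeries.coeff_C_mul,
    PowerSeries.coeff_rescale, inv_pow]
  ring

lemma M_eq_mul_coeff_truncatedPoisson_pow (ha : 0 < a) (m n : ℕ) :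
    (M m n : ℝ) = m ! * coeff m (truncatedPoisson a ^ n) * (q a ^ n / a ^ m) := by
  have := q_pos ha
  rw [M_eq_factorial_mul_coeff, coeff_truncatedPoisson_pow]
  field_simp

lemma coeff_truncatedPoisson_nonneg (ha : 0 < a) (k : ℕ) : 0 ≤ coeff k (truncatedPoisson a) := by
  have := q_pos ha
  have := coeff_qSeries_nonneg k
  rw [coeff_truncatedPoisson]
  positivity

lemma hasSum_coeff_truncatedPoisson (ha : 0 < a) :
    HasSum (fun k => coeff k (truncatedPoisson a)) 1 := by
  simp only [coeff_truncatedPoisson, ← div_self (q_pos ha).ne']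
  exact (hasSum_coeff_qSeries_mul_pow a).div_const (q a)

lemma hasSum_coeff_truncatedPoisson_mul (a : ℝ) :
    HasSum (fun k : ℕ => coeff k (truncatedPoisson a) * k) (Qf a) := by
  simp only [coeff_truncatedPoisson, div_mul_eq_mul_div]
  exact (hasSum_coeff_qSeries_mul_pow_mul a).div_const (q a)

lemma hasSum_coeff_truncatedPoisson_mul_sub (ha : 0 < a) :
    HasSum (fun k : ℕ => coeff k (truncatedPoisson a) * (k - Qf a)) 0 := by
  simpa only [mul_sub, one_mul, sub_self] using
    (hasSum_coeff_truncatedPoisson_mul a).sub ((hasSum_coeff_truncatedPoisson ha).mul_right (Qf a))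

lemma two_le_Qf (ha : 0 < a) : 2 ≤ Qf a := by
  have htwo := (hasSum_coeff_truncatedPoisson ha).mul_right 2
  rw [one_mul] at htwo
  refine hasSum_le (fun k => ?_) htwo (hasSum_coeff_truncatedPoisson_mul a)
  rcases le_or_gt 2 k with hk | hk
  · exact mul_le_mul_of_nonneg_left (mod_cast hk) (coeff_truncatedPoisson_nonneg ha k)
  · simp [coeff_truncatedPoisson, coeff_qSeries, hk.not_ge]

lemma coeff_truncatedPoisson_mul_abs_pow_three_le (ha : 0 < a) {μ : ℝ} (hμ : 0 ≤ μ) (k : ℕ) :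
    coeff k (truncatedPoisson a) * |k - μ| ^ 3
      ≤ 6 * Real.exp μ / q a * ((Real.exp 1 * a) ^ k / k !) := by
  have := q_pos ha
  calc coeff k (truncatedPoisson a) * |k - μ| ^ 3
      ≤ ((k ! : ℝ)⁻¹ * a ^ k / q a) * (6 * (Real.exp μ * Real.exp 1 ^ k)) := by
        rw [coeff_truncatedPoisson]
        gcongr
        · exact coeff_qSeries_le k
        · exact abs_sub_pow_three_le hμ k
    _ = 6 * Real.exp μ / q a * ((Real.exp 1 * a) ^ k / k !) := by rw [mul_pow]; ring

lemma isLatticeLaw_truncatedPoisson {ε C : ℝ} (hε : 0 < ε) (hεa : ε ≤ a) (haC : a ≤ C) :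
    IsLatticeLaw (truncatedPoisson a) (Qf a) (min (ε ^ 2 / 2) (ε ^ 3 / 6) / Real.exp C)
      (6 * Real.exp (C + 2) / (ε ^ 2 / 2) * Real.exp (Real.exp 1 * C)) := by
  have ha : 0 < a := hε.trans_le hεa
  have hq := q_pos ha
  have hQ : 0 ≤ Qf a := by linarith [le_Qf ha]
  have hq_le : q a ≤ Real.exp C := (q_le_exp ha.le).trans (Real.exp_le_exp.2 haC)
  have hle_q : ε ^ 2 / 2 ≤ q a := le_trans (by gcongr) (sq_div_two_le_q ha.le)
  have hthird := coeff_truncatedPoisson_mul_abs_pow_three_le ha hQ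
  have hmajorant := (hasSum_pow_div_factorial (Real.exp 1 * a)).mul_left (6 * Real.exp (Qf a) / q a)
  have hsummable : Summable fun k : ℕ => coeff k (truncatedPoisson a) * |k - Qf a| ^ 3 :=
    .of_nonneg_of_le (fun k => mul_nonneg (coeff_truncatedPoisson_nonneg ha k) (by positivity))
      hthird hmajorant.summable
  refine ⟨coeff_truncatedPoisson_nonneg ha, hasSum_coeff_truncatedPoisson ha,
    hasSum_coeff_truncatedPoisson_mul_sub ha, hsummable, ?_, 2, ?_, ?_⟩
  · calc ∑' k : ℕ, coeff k (truncatedPoisson a) * |k - Qf a| ^ 3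
        ≤ 6 * Real.exp (Qf a) / q a * Real.exp (Real.exp 1 * a) :=
          hasSum_le hthird hsummable.hasSum hmajorant
      _ ≤ 6 * Real.exp (C + 2) / (ε ^ 2 / 2) * Real.exp (Real.exp 1 * C) := by
          gcongr
          linarith [Qf_le ha]
  · calc min (ε ^ 2 / 2) (ε ^ 3 / 6) / Real.exp C ≤ a ^ 2 / 2 / q a := by
          gcongr
          exact (min_le_left _ _).trans (by gcongr)
      _ = coeff 2 (truncatedPoisson a) := by
          simp [coeff_truncatedPoisson, coeff_qSeries, div_eq_inv_mul]
  · calc min (ε ^ 2 / 2) (ε ^ 3 / 6) / Real.exp C ≤ a ^ 3 / 6 / q a := by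
          gcongr
          exact (min_le_right _ _).trans (by gcongr)
      _ = coeff (2 + 1) (truncatedPoisson a) := by
          norm_num [coeff_truncatedPoisson, coeff_qSeries, Nat.factorial, div_eq_inv_mul]

lemma exists_le_coeff_truncatedPoisson_pow {ε : ℝ} (hε : 0 < ε) (C : ℝ) (N : ℕ) :
    ∃ k : ℝ, 0 < k ∧ ∀ a : ℝ, ε ≤ a → a ≤ C → ∀ m n : ℕ, 0 < n → n ≤ N → n * Qf a = m →
      k ≤ coeff m (truncatedPoisson a ^ n) := by
  obtain ⟨J, hJ⟩ := exists_nat_ge (N * (C + 2))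
  refine ⟨(J ! : ℝ)⁻¹ * (min 1 ε ^ J / Real.exp C ^ N), by positivity,
    fun a hεa haC m n hn hnN hmean => ?_⟩
  have ha : 0 < a := hε.trans_le hεa
  have hq := q_pos ha
  have hmn : 2 * n ≤ m := by
    have : (2 * n : ℝ) ≤ m := by
      rw [← hmean, mul_comm]; gcongr; exact two_le_Qf ha
    exact mod_cast this
  have hmJ : m ≤ J := by
    have : (m : ℝ) ≤ J := by
      refine le_trans ?_ hJ
      rw [← hmean]
      have : Qf a ≤ C + 2 := by linarith [Qf_le ha]
      have := two_le_Qf ha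
      gcongr
    exact mod_cast this
  have hnum : min 1 ε ^ J ≤ a ^ m :=
    calc min 1 ε ^ J ≤ min 1 ε ^ m :=
          pow_le_pow_of_le_one (by positivity) (min_le_left _ _) hmJ
      _ ≤ a ^ m := by gcongr; exact (min_le_right _ _).trans hεa
  have hden : q a ^ n ≤ Real.exp C ^ N :=
    calc q a ^ n ≤ Real.exp C ^ n := by
          gcongr; exact (q_le_exp ha.le).trans (Real.exp_le_exp.2 haC)
      _ ≤ Real.exp C ^ N := by
          gcongr; exact Real.one_le_exp (ha.le.trans haC)
  rw [coeff_truncatedPoisson_pow]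
  calc (J ! : ℝ)⁻¹ * (min 1 ε ^ J / Real.exp C ^ N) ≤ (m ! : ℝ)⁻¹ * (a ^ m / q a ^ n) := by gcongr
    _ ≤ coeff m (qSeries ^ n) * (a ^ m / q a ^ n) := by
        gcongr; exact inv_factorial_le_coeff_qSeries_pow hn hmn

theorem exists_coeff_truncatedPoisson_pow_bounds {ε : ℝ} (hε : 0 < ε) (C : ℝ) :
    ∃ k₁ k₂ : ℝ, 0 < k₁ ∧ 0 < k₂ ∧ ∀ a : ℝ, ε ≤ a → a ≤ C → ∀ m n : ℕ, 0 < n → n * Qf a = m →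
      k₁ / √n ≤ coeff m (truncatedPoisson a ^ n) ∧
        coeff m (truncatedPoisson a ^ n) ≤ k₂ / √n := by
  obtain ⟨k₁, k₂, hk₁, hk₂, N, hlarge⟩ := exists_coeff_pow_bounds
    (d := min (ε ^ 2 / 2) (ε ^ 3 / 6) / Real.exp C) (by positivity)
    (6 * Real.exp (C + 2) / (ε ^ 2 / 2) * Real.exp (Real.exp 1 * C))
  obtain ⟨k, hk, hsmall⟩ := exists_le_coeff_truncatedPoisson_pow hε C N
  refine ⟨min k k₁, k₂, lt_min hk hk₁, hk₂, fun a hεa haC m n hn hmean => ?_⟩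
  obtain ⟨hupper, hlower⟩ :=
    hlarge _ _ (isLatticeLaw_truncatedPoisson hε hεa haC) m n hn hmean
  refine ⟨?_, hupper⟩
  rcases le_total N n with hNn | hnN
  · exact le_trans (by gcongr; exact min_le_right _ _) (hlower hNn)
  · have hsqrt : 1 ≤ √n := Real.one_le_sqrt.2 (Nat.one_le_cast.2 hn)
    calc min k k₁ / √n ≤ min k k₁ := div_le_self (by positivity) hsqrt
      _ ≤ k := min_le_left _ _
      _ ≤ _ := hsmall a hεa haC m n hn hnN hmean

end TruncatedPoissonLaw

section Stirling

lemma factorial_le_exp_one_mul {m : ℕ} (hm : 0 < m) :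
    (m ! : ℝ) ≤ Real.exp 1 * √m * (m / Real.exp 1) ^ m := by
  obtain ⟨j, rfl⟩ := Nat.exists_eq_succ_of_ne_zero hm.ne'
  have hanti : Stirling.stirlingSeq (j + 1) ≤ Stirling.stirlingSeq 1 :=
    Stirling.stirlingSeq'_antitone (Nat.zero_le j)
  rw [Stirling.stirlingSeq_one, Stirling.stirlingSeq, div_le_iff₀ (by positivity)] at hanti
  refine hanti.trans (le_of_eq ?_)
  rw [Real.sqrt_mul (by norm_num)]
  field_simp

lemma sqrt_mul_le_factorial (m : ℕ) : √m * (m / Real.exp 1) ^ m ≤ (m ! : ℝ) := by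
  refine le_trans ?_ (Stirling.le_factorial_stirling m)
  gcongr
  exact le_mul_of_one_le_left (by positivity) (by linarith [Real.pi_gt_three])

variable {m n : ℕ} {x k : ℝ}

lemma mul_le_factorial_mul (hn : 0 < n) (hnm : n ≤ m) (hk : 0 ≤ k) (hx : k / √n ≤ x) :
    k * (m / Real.exp 1) ^ m ≤ m ! * x := by
  have : (0 : ℝ) < n := mod_cast hn
  calc k * (m / Real.exp 1) ^ m = √n * (m / Real.exp 1) ^ m * (k / √n) := by field_simp
    _ ≤ √m * (m / Real.exp 1) ^ m * (k / √n) := by gcongr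
    _ ≤ m ! * x := by gcongr; exact sqrt_mul_le_factorial m

lemma factorial_mul_le_mul {C : ℝ} (hm : 0 < m) (hn : 0 < n) (hC : 0 ≤ C) (hmn : m ≤ C * n)
    (hk : 0 ≤ k) (hx : x ≤ k / √n) :
    m ! * x ≤ Real.exp 1 * √C * k * (m / Real.exp 1) ^ m := by
  have : (0 : ℝ) < n := mod_cast hn
  have hsqrt : √m ≤ √C * √n := by rw [← Real.sqrt_mul hC]; exact Real.sqrt_le_sqrt hmn
  calc m ! * x ≤ m ! * (k / √n) := by gcongr
    _ ≤ Real.exp 1 * √m * (m / Real.exp 1) ^ m * (k / √n) := by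
        gcongr; exact factorial_le_exp_one_mul hm
    _ ≤ Real.exp 1 * (√C * √n) * (m / Real.exp 1) ^ m * (k / √n) := by gcongr
    _ = Real.exp 1 * √C * k * (m / Real.exp 1) ^ m := by field_simp

end Stirling

end TruncatedPoisson

open TruncatedPoisson in
theorem stmt2 (ε C : ℝ) (hε : 0 < ε) (hC : 2 + ε ≤ C) :
    ∃ c₁ c₂ : ℝ, 0 < c₁ ∧ c₁ ≤ c₂ ∧
      ∀ m n : ℕ, 0 < m → 0 < n → (2 + ε) * (n : ℝ) ≤ (m : ℝ) → (m : ℝ) ≤ C * (n : ℝ) →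
        ∀ a : ℝ, 0 < a → Qf a = (m : ℝ) / (n : ℝ) →
          c₁ * ((m : ℝ) / (a * Real.exp 1)) ^ m * q a ^ n ≤ (M m n : ℝ) ∧
          (M m n : ℝ) ≤ c₂ * ((m : ℝ) / (a * Real.exp 1)) ^ m * q a ^ n := by
  obtain ⟨k₁, k₂, hk₁, hk₂, hbounds⟩ := exists_coeff_truncatedPoisson_pow_bounds hε C
  refine ⟨k₁, max k₁ (Real.exp 1 * √C * k₂), hk₁, le_max_left _ _,
    fun m n hm hn hlow hupp a ha hQ => ?_⟩
  have hn' : (0 : ℝ) < n := mod_cast hn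
  have hq : 0 < q a := q_pos ha
  have hεa : ε ≤ a := by linarith [Qf_le ha, (le_div_iff₀ hn').2 hlow]
  have haC : a ≤ C := by linarith [le_Qf ha, (div_le_iff₀ hn').2 hupp]
  have hnm : n ≤ m := by exact_mod_cast (by nlinarith : (n : ℝ) ≤ m)
  obtain ⟨hlower, hupper⟩ := hbounds a hεa haC m n hn (by rw [hQ]; field_simp)
  have hscale (c : ℝ) : c * (m / (a * Real.exp 1)) ^ m * q a ^ n
      = c * (m / Real.exp 1) ^ m * (q a ^ n / a ^ m) := by
    rw [mul_comm a, ← div_div, div_pow _ a]; ring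
  rw [M_eq_mul_coeff_truncatedPoisson_pow ha, hscale, hscale]
  refine ⟨mul_le_mul_of_nonneg_right ?_ (by positivity),
    mul_le_mul_of_nonneg_right ?_ (by positivity)⟩
  · exact mul_le_factorial_mul hn hnm hk₁.le hlower
  · exact (factorial_mul_le_mul hm hn (by linarith) hupp hk₂.le hupper).trans
      (by gcongr; exact le_max_right _ _)
end

section
/- For every real s > 0 and every a ∈ [0,1]: a·(exp(as)−1)/(exp(s)−1) ≤ (exp(as)−as−1)/(exp(s)−s−1) ≤ (exp(as)−1)/(exp(s)−1) ≤ exp(as−s). -/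
/-!
The second and third inequalities are convexity and monotonicity of `exp`. The first one, with
`t = a * s`, says that `(exp x - x - 1) / (x * (exp x - 1)) = x⁻¹ - (exp x - 1)⁻¹` decreases from
`t` to `s`. The derivative of this function is nonpositive because `|y| ≤ |sinh y|` at `y = x / 2`.
-/

open Set

theorem exp_sub_one_sq_eq_exp_mul_sinh_sq (x : ℝ) :
    (Real.exp x - 1) ^ 2 = Real.exp x * (2 * Real.sinh (x / 2)) ^ 2 := by
  have exp_eq_sq : Real.exp x = Real.exp (x / 2) ^ 2 := by
    rw [← Real.exp_nat_mul]
    ring_nf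
  rw [Real.sinh_eq, Real.exp_neg, exp_eq_sq]
  field_simp

theorem exp_mul_sq_le_exp_sub_one_sq (x : ℝ) :
    Real.exp x * x ^ 2 ≤ (Real.exp x - 1) ^ 2 := by
  have abs_le_abs_sinh : |x / 2| ≤ |Real.sinh (x / 2)| := by
    rw [Real.abs_sinh]
    exact Real.self_le_sinh_iff.2 (abs_nonneg _)
  have sq_le : x ^ 2 ≤ (2 * Real.sinh (x / 2)) ^ 2 := by
    linarith [sq_le_sq.2 abs_le_abs_sinh]
  rw [exp_sub_one_sq_eq_exp_mul_sinh_sq]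
  gcongr

theorem exp_sub_one_pos {x : ℝ} (hx : 0 < x) : 0 < Real.exp x - 1 :=
  sub_pos.2 (Real.one_lt_exp_iff.2 hx)

theorem exp_sub_self_sub_one_pos {x : ℝ} (hx : x ≠ 0) : 0 < Real.exp x - x - 1 := by
  linarith [Real.add_one_lt_exp hx]

theorem hasDerivAt_inv_sub_inv_exp_sub_one {x : ℝ} (hx : x ≠ 0) :
    HasDerivAt (fun y : ℝ ↦ y⁻¹ - (Real.exp y - 1)⁻¹)
      (Real.exp x / (Real.exp x - 1) ^ 2 - 1 / x ^ 2) x := by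
  have exp_sub_one_ne : Real.exp x - 1 ≠ 0 := sub_ne_zero.2 (mt (Real.exp_eq_one_iff x).1 hx)
  exact ((hasDerivAt_inv hx).sub
    (((Real.hasDerivAt_exp x).sub_const 1).inv exp_sub_one_ne)).congr_deriv (by ring)

theorem antitoneOn_inv_sub_inv_exp_sub_one :
    AntitoneOn (fun x : ℝ ↦ x⁻¹ - (Real.exp x - 1)⁻¹) (Ioi 0) := by
  have hasDeriv (x : ℝ) (hx : x ∈ Ioi 0) :=
    hasDerivAt_inv_sub_inv_exp_sub_one (ne_of_gt (mem_Ioi.1 hx))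
  refine antitoneOn_of_hasDerivWithinAt_nonpos (convex_Ioi 0)
    (fun x hx ↦ (hasDeriv x hx).continuousAt.continuousWithinAt)
    (fun x hx ↦ (hasDeriv x (interior_subset hx)).hasDerivWithinAt) fun x hx ↦ ?_
  have x_pos : 0 < x := interior_subset hx
  rw [sub_nonpos, div_le_div_iff₀ (pow_pos (exp_sub_one_pos x_pos) 2) (by positivity), one_mul]
  exact exp_mul_sq_le_exp_sub_one_sq x

theorem mul_exp_sub_one_div_le_exp_sub_self_sub_one_div {t s : ℝ} (ht : 0 < t) (hts : t ≤ s) :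
    t * (Real.exp t - 1) / (s * (Real.exp s - 1)) ≤
      (Real.exp t - t - 1) / (Real.exp s - s - 1) := by
  have hs : 0 < s := ht.trans_le hts
  have ht_exp := exp_sub_one_pos ht
  have hs_exp := exp_sub_one_pos hs
  have inv_sub_le : s⁻¹ - (Real.exp s - 1)⁻¹ ≤ t⁻¹ - (Real.exp t - 1)⁻¹ :=
    antitoneOn_inv_sub_inv_exp_sub_one ht hs hts
  rw [inv_sub_inv hs.ne' hs_exp.ne', inv_sub_inv ht.ne' ht_exp.ne',
    div_le_div_iff₀ (by positivity) (by positivity)] at inv_sub_le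
  rw [div_le_div_iff₀ (by positivity) (exp_sub_self_sub_one_pos hs.ne')]
  linarith

theorem exp_mul_sub_one_le {a : ℝ} (ha : a ∈ Icc (0 : ℝ) 1) (s : ℝ) :
    Real.exp (a * s) - 1 ≤ a * (Real.exp s - 1) := by
  have convex := convexOn_exp.2 (mem_univ s) (mem_univ 0) ha.1 (sub_nonneg.2 ha.2) (by ring)
  simp only [smul_eq_mul, mul_zero, add_zero, Real.exp_zero] at convex
  linarith

theorem exp_mul_sub_self_sub_one_div_le_exp_mul_sub_one_div {a s : ℝ}
    (ha : a ∈ Icc (0 : ℝ) 1) (hs : 0 < s) :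
    (Real.exp (a * s) - a * s - 1) / (Real.exp s - s - 1) ≤
      (Real.exp (a * s) - 1) / (Real.exp s - 1) := by
  rw [div_le_div_iff₀ (exp_sub_self_sub_one_pos hs.ne') (exp_sub_one_pos hs)]
  linarith [mul_le_mul_of_nonneg_left (exp_mul_sub_one_le ha s) hs.le]

theorem exp_sub_one_div_le_exp_sub {t s : ℝ} (hs : 0 < s) (hts : t ≤ s) :
    (Real.exp t - 1) / (Real.exp s - 1) ≤ Real.exp (t - s) := by
  rw [div_le_iff₀ (exp_sub_one_pos hs), mul_sub, ← Real.exp_add, sub_add_cancel, mul_one]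
  exact sub_le_sub_left (Real.exp_le_one_iff.2 (sub_nonpos.2 hts)) _

theorem stmt4 (s : ℝ) (hs : 0 < s) (a : ℝ) (ha : a ∈ Set.Icc (0:ℝ) 1) :
    a * (Real.exp (a*s) - 1) / (Real.exp s - 1)
        ≤ (Real.exp (a*s) - a*s - 1) / (Real.exp s - s - 1) ∧
    (Real.exp (a*s) - a*s - 1) / (Real.exp s - s - 1)
        ≤ (Real.exp (a*s) - 1) / (Real.exp s - 1) ∧
    (Real.exp (a*s) - 1) / (Real.exp s - 1) ≤ Real.exp (a*s - s) := by
  have as_le_s : a * s ≤ s := mul_le_of_le_one_left hs.le ha.2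
  refine ⟨?_, exp_mul_sub_self_sub_one_div_le_exp_mul_sub_one_div ha hs,
    exp_sub_one_div_le_exp_sub hs as_le_s⟩
  rcases ha.1.eq_or_lt with rfl | a_pos
  · simp
  · calc a * (Real.exp (a * s) - 1) / (Real.exp s - 1)
        = a * s * (Real.exp (a * s) - 1) / (s * (Real.exp s - 1)) := by
          rw [mul_comm a s, mul_assoc s, mul_div_mul_left _ _ hs.ne']
      _ ≤ (Real.exp (a * s) - a * s - 1) / (Real.exp s - s - 1) :=
          mul_exp_sub_one_div_le_exp_sub_self_sub_one_div (mul_pos a_pos hs) as_le_s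
end

section
/- For every real s ≥ 4 and every a ∈ [0,1/2]: a·(exp(as)−1)/(exp(s)−1) ≤ (7/10)·(exp(as)−as−1)/(exp(s)−s−1). -/
/-!
Put `g x = 1 / x - 1 / (exp x - 1) = (exp x - x - 1) / (x * (exp x - 1))`. Dividing the inequality
by `a * (exp (a * s) - 1) / (exp s - 1)` turns it into `g s ≤ 7 / 10 * g (a * s)`. The function `g`
is decreasing, because `x ^ 2 * exp x ≤ (exp x - 1) ^ 2` is the square of `x / 2 ≤ sinh (x / 2)`,
so only `a = 1 / 2` matters. There `exp s - 1` factors as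
`(exp (s / 2) - 1) * (exp (s / 2) + 1)`, and the claim reduces to `7 / 2 * y ≤ exp y` for `y ≥ 2`.
-/

open Real Set

/-- The gap `1 / x - 1 / (exp x - 1)` between the reciprocals of `x` and of `exp x - 1`, whose
monotonicity controls the quotients in the theorem. It is meant for `x ≠ 0`; at `x = 0` division by
zero makes its value `0`, not the limit `1 / 2`. -/
noncomputable def reciprocalGap (x : ℝ) : ℝ := 1 / x - 1 / (exp x - 1)

theorem exp_sub_one_ne_zero {x : ℝ} (hx : x ≠ 0) : exp x - 1 ≠ 0 :=
  sub_ne_zero.2 (exp_eq_one_iff x |>.not.2 hx)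

theorem mul_exp_sub_one_mul_reciprocalGap {x : ℝ} (hx : x ≠ 0) :
    x * (exp x - 1) * reciprocalGap x = exp x - x - 1 := by
  have hexp := exp_sub_one_ne_zero hx
  unfold reciprocalGap
  field_simp
  ring

theorem sq_le_sinh_sq (x : ℝ) : x ^ 2 ≤ sinh x ^ 2 := by
  rw [sq_le_sq, abs_sinh]
  exact self_le_sinh_iff.2 (abs_nonneg x)

theorem exp_sub_one_eq_exp_half_mul_sinh_half (x : ℝ) :
    exp x - 1 = 2 * exp (x / 2) * sinh (x / 2) := by
  have hsq : exp (x / 2) * exp (x / 2) = exp x := by rw [← exp_add, add_halves]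
  have hinv : exp (x / 2) * exp (-(x / 2)) = 1 := by rw [← exp_add, add_neg_cancel, exp_zero]
  rw [sinh_eq]
  linear_combination hinv - hsq

theorem sq_mul_exp_le_exp_sub_one_sq (x : ℝ) : x ^ 2 * exp x ≤ (exp x - 1) ^ 2 := by
  have hsq : exp (x / 2) ^ 2 = exp x := by rw [sq, ← exp_add, add_halves]
  calc x ^ 2 * exp x = 4 * exp x * (x / 2) ^ 2 := by ring
    _ ≤ 4 * exp x * sinh (x / 2) ^ 2 := by gcongr ?_ * ?_; exact sq_le_sinh_sq (x / 2)
    _ = (exp x - 1) ^ 2 := by rw [exp_sub_one_eq_exp_half_mul_sinh_half x, ← hsq]; ring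

theorem hasDerivAt_reciprocalGap {x : ℝ} (hx : x ≠ 0) :
    HasDerivAt reciprocalGap (exp x / (exp x - 1) ^ 2 - 1 / x ^ 2) x := by
  have hexp := ((hasDerivAt_exp x).sub_const 1).inv (exp_sub_one_ne_zero hx)
  have hgap := (hasDerivAt_inv hx).sub hexp
  simp only [← one_div] at hgap
  exact hgap.congr_deriv (by ring)

theorem deriv_reciprocalGap_nonpos {x : ℝ} (hx : x ≠ 0) : deriv reciprocalGap x ≤ 0 := by
  have hexp := exp_sub_one_ne_zero hx
  rw [(hasDerivAt_reciprocalGap hx).deriv, sub_nonpos, div_le_div_iff₀ (by positivity)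
    (by positivity), one_mul, mul_comm]
  exact sq_mul_exp_le_exp_sub_one_sq x

theorem antitoneOn_reciprocalGap : AntitoneOn reciprocalGap (Ioi 0) := by
  have hderiv : ∀ x ∈ Ioi (0 : ℝ), HasDerivAt reciprocalGap _ x := fun x hx ↦
    hasDerivAt_reciprocalGap (ne_of_gt hx)
  refine antitoneOn_of_deriv_nonpos (convex_Ioi 0)
    (fun x hx ↦ (hderiv x hx).continuousAt.continuousWithinAt) ?_ ?_ <;> rw [interior_Ioi]
  · exact fun x hx ↦ (hderiv x hx).differentiableAt.differentiableWithinAt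
  · exact fun x hx ↦ deriv_reciprocalGap_nonpos (ne_of_gt hx)

theorem mul_exp_sub_one_div_le_iff {a s c : ℝ} (ha : 0 < a) (hs : 0 < s) :
    a * (exp (a * s) - 1) / (exp s - 1)
        ≤ c * ((exp (a * s) - a * s - 1) / (exp s - s - 1)) ↔
      reciprocalGap s ≤ c * reciprocalGap (a * s) := by
  have has : 0 < a * s := mul_pos ha hs
  have hexp_s : 0 < exp s - 1 := sub_pos.2 (one_lt_exp_iff.2 hs)
  have hexp_as : 0 < exp (a * s) - 1 := sub_pos.2 (one_lt_exp_iff.2 has)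
  have hdenom : 0 < exp s - s - 1 := by linarith [add_one_lt_exp hs.ne']
  have hfactor : 0 < a * s * (exp (a * s) - 1) * (exp s - 1) := by positivity
  rw [← mul_div_assoc, div_le_div_iff₀ hexp_s hdenom,
    ← mul_exp_sub_one_mul_reciprocalGap hs.ne', ← mul_exp_sub_one_mul_reciprocalGap has.ne']
  convert mul_le_mul_iff_right₀ hfactor using 2 <;> ring

theorem seven_halves_mul_le_exp {y : ℝ} (hy : 2 ≤ y) : 7 / 2 * y ≤ exp y := by
  have hexp_two : 7 ≤ exp 2 := by
    calc (7 : ℝ) ≤ 2.7 ^ 2 := by norm_num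
      _ ≤ exp 1 ^ 2 := by gcongr; linarith [exp_one_gt_d9]
      _ = exp 2 := by rw [← exp_nat_mul]; norm_num
  calc 7 / 2 * y ≤ 7 * (y - 2 + 1) := by linarith
    _ ≤ exp 2 * exp (y - 2) := by gcongr; exact add_one_le_exp (y - 2)
    _ = exp y := by rw [← exp_add, add_sub_cancel]

theorem reciprocalGap_two_mul_le {y : ℝ} (hy : 2 ≤ y) :
    reciprocalGap (2 * y) ≤ 7 / 10 * reciprocalGap y := by
  have hexp := seven_halves_mul_le_exp hy
  have hexp_two_mul : exp (2 * y) - 1 = (exp y - 1) * (exp y + 1) := by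
    rw [two_mul, exp_add]
    ring
  unfold reciprocalGap
  rw [hexp_two_mul]
  generalize exp y = E at *
  have hE : 0 < E - 1 := by linarith
  have hleading : 7 / 10 / E ≤ 1 / 5 / y := by
    rw [div_le_div_iff₀ (by linarith) (by linarith)]
    linarith
  have hremainder : 7 / 10 / (E - 1) - 7 / 10 / E ≤ 1 / ((E - 1) * (E + 1)) := by
    rw [div_sub_div _ _ hE.ne' (by linarith), div_le_div_iff₀ (by nlinarith) (by nlinarith)]
    nlinarith
  have hsplit : 1 / (2 * y) = 7 / 10 * (1 / y) - 1 / 5 / y := by ring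
  rw [hsplit]
  linarith [show 7 / 10 / (E - 1) = 7 / 10 * (1 / (E - 1)) by ring]

theorem stmt5 (s : ℝ) (hs : 4 ≤ s) (a : ℝ) (ha : a ∈ Set.Icc (0:ℝ) (1/2)) :
    a * (Real.exp (a*s) - 1) / (Real.exp s - 1)
      ≤ (7/10) * ((Real.exp (a*s) - a*s - 1) / (Real.exp s - s - 1)) := by
  obtain ⟨ha_nonneg, ha_le⟩ := ha
  obtain rfl | ha_pos := ha_nonneg.eq_or_lt
  · simp
  have hs_pos : 0 < s := by linarith
  rw [mul_exp_sub_one_div_le_iff ha_pos hs_pos]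
  have has_le : a * s ≤ s / 2 := by nlinarith
  calc reciprocalGap s = reciprocalGap (2 * (s / 2)) := by rw [mul_div_cancel₀ s two_ne_zero]
    _ ≤ 7 / 10 * reciprocalGap (s / 2) := reciprocalGap_two_mul_le (by linarith)
    _ ≤ 7 / 10 * reciprocalGap (a * s) := by
      gcongr
      exact antitoneOn_reciprocalGap (mul_pos ha_pos hs_pos) (half_pos hs_pos) has_le
end
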